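/- Let (D'_1, D'_2) have the distribution f'_2 under a power-law layer type distribution, and let δ_t = t^{1/2} ln⁴(2+t). Then for any s_0 > 0 there exists a constant c_{**} > 0 (depending on s_0, β, b) such that for all s, t with s_0 < s + δ_s + δ_t < t, one has P(D'_1 = s, D'_2 = t) ≤ e^{−c_{**} ln⁸ t}. -/

import Mathlib

open MeasureTheory ProbabilityTheory Filter
open scoped ENNReal Topology Classical

noncomputable section

/-- The binomial probability mass function `Bin(x,y)(s)`. -/
def binP (x : ℕ) (y : ℝ) (s : ℕ) : ℝ := (x.choose s : ℝ) * y ^ s * (1 - y) ^ (x - s)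

/-- Convolution of (mass) functions on `ℕ`. -/
def conv (f g : ℕ → ℝ) (s : ℕ) : ℝ := ∑ i ∈ Finset.range (s + 1), f i * g (s - i)

/-- Iterated convolution power: `convPow f j` is the `j`-fold convolution of `f`. -/
def convPow (f : ℕ → ℝ) : ℕ → ℕ → ℝ
  | 0 => fun s => if s = 0 then 1 else 0
  | j + 1 => conv f (convPow f j)

/-- The compound Poisson probability mass function `CPoi(lam, f)`, i.e. the law of
`H_1 + ⋯ + H_Λ` where `Λ ~ Poi(lam)` and the `H_k` are i.i.d. with mass function `f`,
independent of `Λ`. -/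
def cpoi (lam : ℝ) (f : ℕ → ℝ) (s : ℕ) : ℝ :=
  ∑' j : ℕ, Real.exp (-lam) * lam ^ j / (j.factorial : ℝ) * convPow f j s

/-- Convolution of (mass) functions on `ℕ × ℕ`. -/
def conv2 (F G : ℕ → ℕ → ℝ) (s t : ℕ) : ℝ :=
  ∑ i ∈ Finset.range (s + 1), ∑ j ∈ Finset.range (t + 1), F i j * G (s - i) (t - j)

/-- Point mass at `(1,1)`, as a mass function on `ℕ × ℕ`. -/
def delta11 (s t : ℕ) : ℝ := if s = 1 ∧ t = 1 then 1 else 0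

/-- The cross moment `P_{rs} = E[(X)_r Y^s]` for the layer type distribution
`P(dx,dy) = p(dx) δ_{q(x)}(dy)`. -/
def mom (p q : ℕ → ℝ) (r s : ℕ) : ℝ :=
  ∑' x : ℕ, (x.descFactorial r : ℝ) * q x ^ s * p x

/-- The increment distribution `g(s) = ∫ Bin(x-1,y)(s) x P(dx,dy) / P₁₀` for
`P(dx,dy) = p(dx) δ_{q(x)}(dy)`. -/
def gInc (p q : ℕ → ℝ) (s : ℕ) : ℝ :=
  (∑' x : ℕ, (x : ℝ) * binP (x - 1) (q x) s * p x) / mom p q 1 0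

/-- The limiting degree distribution `\bar f₁ = CPoi(μ P₁₀, g)`. -/
def barf1 (mu : ℝ) (p q : ℕ → ℝ) (s : ℕ) : ℝ :=
  cpoi (mu * mom p q 1 0) (gInc p q) s

/-- The distribution `f₂'` of `(D₁', D₂')`:
`f₂'(s,t) = ∫ Bin(x-2,y)(s) Bin(x-2,y)(t) (x)₂ y P(dx,dy) / P₂₁` for
`P(dx,dy) = p(dx) δ_{q(x)}(dy)`. -/
def f2p (p q : ℕ → ℝ) (s t : ℕ) : ℝ :=
  (∑' x : ℕ, (x.descFactorial 2 : ℝ) * q x * binP (x - 2) (q x) s * binP (x - 2) (q x) t * p x) /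
    mom p q 2 1

/-- The limiting bidegree distribution `\bar f₂ = δ₍₁,₁₎ ∗ (\bar f₁ ⊗ \bar f₁) ∗ f₂'`,
i.e. the joint law of `(D₁*, D₂*) = (1 + D₁ + D₁', 1 + D₂ + D₂')` where `D₁`, `D₂`,
`(D₁', D₂')` are mutually independent, `D₁, D₂ ~ \bar f₁` and `(D₁', D₂') ~ f₂'`. -/
def barf2 (mu : ℝ) (p q : ℕ → ℝ) : ℕ → ℕ → ℝ :=
  conv2 (conv2 delta11 fun s t => barf1 mu p q s * barf1 mu p q t) (f2p p q)

/-- `δ_t = t^{1/2} ln⁴(2+t)`. -/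
def deltaFn (t : ℕ) : ℝ := Real.sqrt t * Real.log (2 + (t : ℝ)) ^ (4 : ℕ)

/-!
Two independent `Bin(n, y)` variables have joint generating function
`(1 - y + y w) ^ n * (1 - y + y z) ^ n`, which on the line `w + z = 2` is at most `1` by AM-GM,
whatever `n` and `y` are. Tilting by `w = exp (-h) / cosh h` and `z = exp h / cosh h` and using
`cosh h ≤ exp (h ^ 2 / 2)` therefore yields the Gaussian bound `exp (-(t - s) ^ 2 / (2 (s + t)))`
for the probability of the pair `(s, t)`. Being uniform in `n` and `y`, it passes to the mixture
`f₂'`, and a gap `t - s ≥ δ_t` makes the exponent at least `δ_t ^ 2 / (4 t) ≥ ln⁸ t / 4`.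
The normalisation `P₂₁` is finite because its terms are of order `x ^ (2 - β - α)` and `α + β > 3`.
-/

section Binomial

variable {n : ℕ} {y : ℝ}

lemma binP_nonneg (hy : y ∈ Set.Icc (0 : ℝ) 1) (k : ℕ) : 0 ≤ binP n y k :=
  mul_nonneg (mul_nonneg (Nat.cast_nonneg _) (pow_nonneg hy.1 _))
    (pow_nonneg (sub_nonneg.2 hy.2) _)

lemma binP_eq_zero_of_lt {k : ℕ} (hk : n < k) : binP n y k = 0 := by
  simp [binP, Nat.choose_eq_zero_of_lt hk]

lemma sum_binP_mul_pow (n : ℕ) (y z : ℝ) :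
    ∑ k ∈ Finset.range (n + 1), binP n y k * z ^ k = (y * z + (1 - y)) ^ n := by
  rw [add_pow]
  refine Finset.sum_congr rfl fun k _ => ?_
  rw [binP, mul_pow]
  ring

lemma binP_mul_pow_le (hy : y ∈ Set.Icc (0 : ℝ) 1) {z : ℝ} (hz : 0 ≤ z) (k : ℕ) :
    binP n y k * z ^ k ≤ (y * z + (1 - y)) ^ n := by
  have hterm : ∀ i, 0 ≤ binP n y i * z ^ i := fun i =>
    mul_nonneg (binP_nonneg hy i) (pow_nonneg hz i)
  rw [← sum_binP_mul_pow]
  rcases lt_or_ge n k with hk | hk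
  · rw [binP_eq_zero_of_lt hk, zero_mul]
    exact Finset.sum_nonneg fun i _ => hterm i
  · exact Finset.single_le_sum (fun i _ => hterm i) (Finset.mem_range.2 (Nat.lt_succ_of_le hk))

lemma binP_mul_binP_mul_pow_mul_pow_le_one (hy : y ∈ Set.Icc (0 : ℝ) 1) {w z : ℝ} (hw : 0 ≤ w)
    (hz : 0 ≤ z) (hwz : w + z = 2) (s t : ℕ) :
    binP n y s * binP n y t * (w ^ s * z ^ t) ≤ 1 := by
  have hfactor : ∀ {v : ℝ}, 0 ≤ v → 0 ≤ y * v + (1 - y) := fun hv =>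
    add_nonneg (mul_nonneg hy.1 hv) (sub_nonneg.2 hy.2)
  have hamgm : (y * w + (1 - y)) * (y * z + (1 - y)) ≤ 1 := by
    obtain rfl : z = 2 - w := by linarith
    linarith [sq_nonneg (y * (w - 1))]
  calc binP n y s * binP n y t * (w ^ s * z ^ t)
      = (binP n y s * w ^ s) * (binP n y t * z ^ t) := by ring
    _ ≤ (y * w + (1 - y)) ^ n * (y * z + (1 - y)) ^ n :=
        mul_le_mul (binP_mul_pow_le hy hw s) (binP_mul_pow_le hy hz t)
          (mul_nonneg (binP_nonneg hy t) (pow_nonneg hz t)) (pow_nonneg (hfactor hw) n)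
    _ = ((y * w + (1 - y)) * (y * z + (1 - y))) ^ n := (mul_pow _ _ _).symm
    _ ≤ 1 := pow_le_one₀ (mul_nonneg (hfactor hw) (hfactor hz)) hamgm

lemma exp_sub_half_sq_le_exp_div_cosh (h : ℝ) :
    Real.exp (h - h ^ 2 / 2) ≤ Real.exp h / Real.cosh h := by
  rw [Real.exp_sub]
  exact div_le_div_of_nonneg_left (Real.exp_pos h).le (Real.cosh_pos h)
    (Real.cosh_le_exp_half_sq h)

lemma exp_le_exp_neg_div_cosh_pow_mul_exp_div_cosh_pow (h : ℝ) (s t : ℕ) :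
    Real.exp (h * (t - s) - h ^ 2 / 2 * (s + t)) ≤
      (Real.exp (-h) / Real.cosh h) ^ s * (Real.exp h / Real.cosh h) ^ t := by
  have hexp_neg : Real.exp (-h - h ^ 2 / 2) ≤ Real.exp (-h) / Real.cosh h := by
    simpa only [neg_sq, Real.cosh_neg] using exp_sub_half_sq_le_exp_div_cosh (-h)
  have hexp := exp_sub_half_sq_le_exp_div_cosh h
  calc Real.exp (h * (t - s) - h ^ 2 / 2 * (s + t))
      = Real.exp (-h - h ^ 2 / 2) ^ s * Real.exp (h - h ^ 2 / 2) ^ t := by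
        rw [← Real.exp_nat_mul, ← Real.exp_nat_mul, ← Real.exp_add]
        ring_nf
    _ ≤ (Real.exp (-h) / Real.cosh h) ^ s * (Real.exp h / Real.cosh h) ^ t := by gcongr

lemma binP_mul_binP_le_exp (hy : y ∈ Set.Icc (0 : ℝ) 1) (s t : ℕ) :
    binP n y s * binP n y t ≤ Real.exp (-(((t : ℝ) - s) ^ 2 / (2 * (s + t)))) := by
  -- The exponent `h (t - s) - h ^ 2 (s + t) / 2` is largest at this `h`.
  set h : ℝ := (t - s) / (s + t) with h_def
  have hcosh := Real.cosh_pos h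
  have hexponent : h * (t - s) - h ^ 2 / 2 * (s + t) = ((t : ℝ) - s) ^ 2 / (2 * (s + t)) := by
    rcases eq_or_ne ((s : ℝ) + t) 0 with hst | hst
    · simp [h_def, hst]
    · rw [h_def]
      field_simp
      ring
  have hsum : Real.exp (-h) / Real.cosh h + Real.exp h / Real.cosh h = 2 := by
    rw [← add_div, div_eq_iff hcosh.ne', Real.cosh_eq]
    ring
  have htilt := binP_mul_binP_mul_pow_mul_pow_le_one (n := n) hy (by positivity) (by positivity)
    hsum s t
  rw [Real.exp_neg, ← one_div, le_div_iff₀ (Real.exp_pos _), ← hexponent]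
  exact (mul_le_mul_of_nonneg_left (exp_le_exp_neg_div_cosh_pow_mul_exp_div_cosh_pow h s t)
    (mul_nonneg (binP_nonneg hy s) (binP_nonneg hy t))).trans htilt

end Binomial

section Mixture

variable {p q : ℕ → ℝ}

lemma mom_term_nonneg (hp : ∀ x, 0 ≤ p x) (hq : ∀ x, 0 ≤ q x) (r k x : ℕ) :
    0 ≤ (x.descFactorial r : ℝ) * q x ^ k * p x :=
  mul_nonneg (mul_nonneg (Nat.cast_nonneg _) (pow_nonneg (hq x) k)) (hp x)

lemma f2p_le_of_forall_binP_mul_binP_le (hp : ∀ x, 0 ≤ p x) (hq : ∀ x, q x ∈ Set.Icc (0 : ℝ) 1)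
    (hmom : 0 < mom p q 2 1) {s t : ℕ} {K : ℝ}
    (hK : ∀ x, binP (x - 2) (q x) s * binP (x - 2) (q x) t ≤ K) : f2p p q s t ≤ K := by
  have hsummable : Summable fun x : ℕ => (x.descFactorial 2 : ℝ) * q x ^ 1 * p x := by
    by_contra hdiv
    exact hmom.ne' (tsum_eq_zero_of_not_summable hdiv)
  have hweight := mom_term_nonneg hp (fun x => (hq x).1) 2 1
  have hterm : ∀ x : ℕ,
      (x.descFactorial 2 : ℝ) * q x * binP (x - 2) (q x) s * binP (x - 2) (q x) t * p x =
        binP (x - 2) (q x) s * binP (x - 2) (q x) t *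
          ((x.descFactorial 2 : ℝ) * q x ^ 1 * p x) := fun x => by ring
  rw [f2p, div_le_iff₀ hmom, mom, ← tsum_mul_left, tsum_congr hterm]
  have hle := fun x => mul_le_mul_of_nonneg_right (hK x) (hweight x)
  refine Summable.tsum_le_tsum hle (Summable.of_nonneg_of_le (fun x => ?_) hle ?_) ?_
  · exact mul_nonneg (mul_nonneg (binP_nonneg (hq x) s) (binP_nonneg (hq x) t)) (hweight x)
  all_goals exact hsummable.mul_left K

lemma f2p_le_exp (hp : ∀ x, 0 ≤ p x) (hq : ∀ x, q x ∈ Set.Icc (0 : ℝ) 1)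
    (hmom : 0 < mom p q 2 1) (s t : ℕ) :
    f2p p q s t ≤ Real.exp (-(((t : ℝ) - s) ^ 2 / (2 * (s + t)))) :=
  f2p_le_of_forall_binP_mul_binP_le hp hq hmom fun x => binP_mul_binP_le_exp (hq x) s t

lemma deltaFn_nonneg (t : ℕ) : 0 ≤ deltaFn t := by
  unfold deltaFn
  positivity

lemma deltaFn_sq (t : ℕ) : deltaFn t ^ 2 = t * Real.log (2 + t) ^ 8 := by
  rw [deltaFn, mul_pow, Real.sq_sqrt (Nat.cast_nonneg t), ← pow_mul]

lemma log_pow_eight_le_of_add_deltaFn_lt {s t : ℕ} (hst : (s : ℝ) + deltaFn t < t) :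
    1 / 4 * Real.log t ^ 8 ≤ ((t : ℝ) - s) ^ 2 / (2 * (s + t)) := by
  have hδ := deltaFn_nonneg t
  have ht : (0 : ℝ) < t := by linarith
  calc 1 / 4 * Real.log t ^ 8 ≤ 1 / 4 * Real.log (2 + t) ^ 8 := by
        gcongr
        linarith
    _ = deltaFn t ^ 2 / (2 * (t + t)) := by
        rw [deltaFn_sq]
        field_simp
        ring
    _ ≤ ((t : ℝ) - s) ^ 2 / (2 * (s + t)) := by
        have hsum : (s : ℝ) + t ≤ t + t := by linarith
        have hgap : deltaFn t ≤ t - s := by linarith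
        gcongr

theorem f2p_offdiagonal_bound_general (hp : ∀ x, 0 ≤ p x) (hq : ∀ x, q x ∈ Set.Icc (0 : ℝ) 1)
    (hmom : 0 < mom p q 2 1) {s t : ℕ} (hst : (s : ℝ) + deltaFn t < t) :
    f2p p q s t ≤ Real.exp (-(1 / 4) * Real.log t ^ 8) := by
  refine (f2p_le_exp hp hq hmom s t).trans (Real.exp_le_exp.2 ?_)
  rw [neg_mul]
  exact neg_le_neg (log_pow_eight_le_of_add_deltaFn_lt hst)

end Mixture

section PowerLaw

variable {p q : ℕ → ℝ} {a b α β : ℝ}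

lemma isBigO_rpow_neg_of_tendsto_mul_rpow
    (hp : Tendsto (fun x : ℕ => p x * (x : ℝ) ^ α) atTop (𝓝 a)) :
    p =O[atTop] fun x : ℕ => (x : ℝ) ^ (-α) := by
  refine Asymptotics.isBigO_of_div_tendsto_nhds ?_ a (hp.congr fun x => ?_)
  · filter_upwards [eventually_gt_atTop 0] with x hx hzero
    exact absurd hzero (Real.rpow_pos_of_pos (Nat.cast_pos.2 hx) _).ne'
  · rw [Pi.div_apply, Real.rpow_neg (Nat.cast_nonneg x), div_inv_eq_mul]

lemma summable_mom_term_of_isBigO (hp : p =O[atTop] fun x : ℕ => (x : ℝ) ^ (-α))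
    (hq : q =O[atTop] fun x : ℕ => (x : ℝ) ^ (-β)) {r k : ℕ} (hrk : (r : ℝ) + 1 < α + k * β) :
    Summable fun x : ℕ => (x.descFactorial r : ℝ) * q x ^ k * p x := by
  have hfactorial :
      (fun x : ℕ => (x.descFactorial r : ℝ)) =O[atTop] fun x : ℕ => (x : ℝ) ^ r := by
    refine Asymptotics.isBigO_of_le _ fun x => ?_
    rw [← Nat.cast_pow, Real.norm_natCast, Real.norm_natCast]
    exact Nat.cast_le.2 (Nat.descFactorial_le_pow x r)
  have hexponent : (fun x : ℕ => (x : ℝ) ^ r * ((x : ℝ) ^ (-β)) ^ k * (x : ℝ) ^ (-α)) =ᶠ[atTop]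
      fun x : ℕ => (x : ℝ) ^ (r - k * β - α) := by
    filter_upwards [eventually_gt_atTop 0] with x hx
    have hx' : (0 : ℝ) < x := Nat.cast_pos.2 hx
    rw [← Real.rpow_mul_natCast hx'.le, ← Real.rpow_natCast, ← Real.rpow_add hx',
      ← Real.rpow_add hx']
    ring_nf
  exact summable_of_isBigO_nat (Real.summable_nat_rpow.2 (by linarith))
    (((hfactorial.mul (hq.pow k)).mul hp).trans_eventuallyEq hexponent)

lemma mom_pos {r k : ℕ} (hp : ∀ x, 0 ≤ p x) (hq : ∀ x, 0 ≤ q x)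
    (hsummable : Summable fun x : ℕ => (x.descFactorial r : ℝ) * q x ^ k * p x)
    {x : ℕ} (hx : r ≤ x) (hqx : 0 < q x) (hpx : 0 < p x) : 0 < mom p q r k := by
  refine hsummable.tsum_pos (mom_term_nonneg hp hq r k) x ?_
  have : 0 < x.descFactorial r := Nat.pos_of_ne_zero fun hzero =>
    hx.not_gt (Nat.descFactorial_eq_zero_iff_lt.1 hzero)
  positivity

lemma min_one_mul_rpow_mem_Icc (hb : 0 ≤ b) (β : ℝ) (x : ℕ) :
    min 1 (b * (x : ℝ) ^ (-β)) ∈ Set.Icc (0 : ℝ) 1 :=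
  ⟨le_min zero_le_one (by positivity), min_le_left _ _⟩

lemma isBigO_min_one_mul_rpow (hb : 0 ≤ b) (β : ℝ) :
    (fun x : ℕ => min 1 (b * (x : ℝ) ^ (-β))) =O[atTop] fun x : ℕ => (x : ℝ) ^ (-β) := by
  refine Asymptotics.IsBigO.of_bound b (Eventually.of_forall fun x => ?_)
  rw [Real.norm_of_nonneg (min_one_mul_rpow_mem_Icc hb β x).1, Real.norm_of_nonneg (by positivity)]
  exact min_le_right _ _

lemma mom_pos_of_powerLaw (ha : 0 < a) (hb : 0 < b) (hp : ∀ x, 0 ≤ p x)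
    (hptail : Tendsto (fun x : ℕ => p x * (x : ℝ) ^ α) atTop (𝓝 a)) {r k : ℕ}
    (hrk : (r : ℝ) + 1 < α + k * β) :
    0 < mom p (fun x => min 1 (b * (x : ℝ) ^ (-β))) r k := by
  obtain ⟨x, hpx, hrx, hx⟩ : ∃ x : ℕ, 0 < p x * (x : ℝ) ^ α ∧ r ≤ x ∧ 0 < x :=
    ((hptail.eventually_const_lt ha).and
      ((eventually_ge_atTop r).and (eventually_gt_atTop 0))).exists
  exact mom_pos hp (fun x => (min_one_mul_rpow_mem_Icc hb.le β x).1)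
    (summable_mom_term_of_isBigO (isBigO_rpow_neg_of_tendsto_mul_rpow hptail)
      (isBigO_min_one_mul_rpow hb.le β) hrk)
    hrx (lt_min one_pos (by positivity)) (pos_of_mul_pos_left hpx (by positivity))

end PowerLaw

/-- **Off-diagonal bound (eq. (2020-02-27) in the paper)**. Under the power-law layer type
distribution, with `δ_t = t^{1/2} ln⁴(2+t)`: for any `s₀ > 0` there is a constant
`c** > 0` such that `P(D₁' = s, D₂' = t) ≤ exp(-c** ln⁸ t)` whenever
`s₀ < s + δ_s + δ_t < t`. -/
theorem f2p_offdiagonal_bound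
    (a b α β : ℝ) (ha : 0 < a) (hb : 0 < b)
    (hα : 2 < α) (hβ0 : 0 ≤ β) (hβ1 : β < 1) (hαβ : 3 < α + β)
    (hb1 : β = 0 → b < 1)
    (p : ℕ → ℝ) (hpnn : ∀ x, 0 ≤ p x) (hpsum : HasSum p 1)
    (hptail : Tendsto (fun x : ℕ => p x * (x : ℝ) ^ α) atTop (𝓝 a))
    (q : ℕ → ℝ) (hq : ∀ x : ℕ, q x = min 1 (b * (x : ℝ) ^ (-β))) :
    ∀ s0 : ℝ, 0 < s0 → ∃ c : ℝ, 0 < c ∧ ∀ s t : ℕ,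
      s0 < (s : ℝ) + deltaFn s + deltaFn t → (s : ℝ) + deltaFn s + deltaFn t < (t : ℝ) →
      f2p p q s t ≤ Real.exp (-c * Real.log t ^ (8 : ℕ)) := by
  obtain rfl : q = fun x : ℕ => min 1 (b * (x : ℝ) ^ (-β)) := funext hq
  have hmom := mom_pos_of_powerLaw (r := 2) (k := 1) (β := β) ha hb hpnn hptail
    (by push_cast; linarith)
  exact fun _ _ => ⟨1 / 4, by norm_num, fun s t _ hst =>
    f2p_offdiagonal_bound_general hpnn (min_one_mul_rpow_mem_Icc hb.le β) hmom
      (by linarith [deltaFn_nonneg s])⟩
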